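/- There exists a C¹-smooth convex function F : ℝ³ → ℝ such that ∂F/∂uᵢ(u) = aᵢ(e^{u₁}, e^{u₂}, e^{u₃}) for all u = (u₁,u₂,u₃) ∈ ℝ³ and i = 1,2,3. (Equivalently, the C⁰ differential 1-form Σᵢ aᵢ d(ln xᵢ) is closed on ℝ³_{>0} and its potential F is C¹ and convex on all of ℝ³.) -/

import Mathlib

noncomputable section

open Real Set Filter

/-- The generalized Euclidean triangle angle `aᵢ(x)` opposite the side of length `x i`,
for a generalized triangle with (positive) side lengths `x 0, x 1, x 2`:
it is `π` if `x i ≥ x j + x k`, `0` if some other side is at least the sum of the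
remaining two, and otherwise the usual Euclidean angle `arccos((xⱼ²+x_k²−xᵢ²)/(2xⱼx_k))`. -/
noncomputable def genAngle (x : Fin 3 → ℝ) (i : Fin 3) : ℝ :=
  if x (i + 1) + x (i + 2) ≤ x i then Real.pi
  else if x i + x (i + 2) ≤ x (i + 1) ∨ x i + x (i + 1) ≤ x (i + 2) then 0
  else Real.arccos
    ((x (i + 1) ^ 2 + x (i + 2) ^ 2 - x i ^ 2) / (2 * x (i + 1) * x (i + 2)))

/-!
The potential is a Legendre transform. Let `L t = ∫₀ᵗ log (sin s) ds`, let `Δ` be the simplex of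
nonnegative triples with sum `π`, and put `F u = max_{a ∈ Δ} ∑ (aᵢ uᵢ - L aᵢ)`. Along `Δ` the
function `∑ L aᵢ` is convex, because its Hessian `∑ cot aᵢ daᵢ²` is positive on vectors with sum
zero when `a₁ + a₂ + a₃ = π`. By the law of sines, the maximum is attained at the angles of the
triangle with side lengths `exp uᵢ`. The degenerate triangles follow by a limit to the boundary of
the strict triangle inequalities, beyond which the maximizer stays at a vertex of `Δ`. So the angles
are a subgradient of `F`; as they depend continuously on `u`, they are its gradient.
-/

section Subgradient

variable {E : Type*}

theorem convexOn_of_subgradient {𝕜 : Type*} [Field 𝕜] [LinearOrder 𝕜] [IsStrictOrderedRing 𝕜]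
    [AddCommGroup E] [Module 𝕜 E] {s : Set E} {f : E → 𝕜} {g : E → E →ₗ[𝕜] 𝕜}
    (hs : Convex 𝕜 s) (hfg : ∀ x ∈ s, ∀ y ∈ s, f x + g x (y - x) ≤ f y) : ConvexOn 𝕜 s f := by
  refine ⟨hs, fun x hx y hy a b ha hb hab => ?_⟩
  set z := a • x + b • y with hz
  have hz_mem : z ∈ s := hs hx hy ha hb hab
  have h_cancel : a * g z (x - z) + b * g z (y - z) = 0 := by
    have hxy : a • (x - z) + b • (y - z) = 0 := by
      rw [smul_sub, smul_sub, sub_add_sub_comm, ← add_smul, hab, one_smul, hz, sub_self]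
    simpa only [map_add, map_smul, smul_eq_mul, map_zero] using congrArg (g z) hxy
  calc f z = a * (f z + g z (x - z)) + b * (f z + g z (y - z)) := by
        linear_combination (-f z) * hab - h_cancel
    _ ≤ a • f x + b • f y := by
        simp only [smul_eq_mul]
        gcongr
        exacts [hfg z hz_mem x hx, hfg z hz_mem y hy]

variable [NormedAddCommGroup E] [NormedSpace ℝ E] {f : E → ℝ} {g : E → E →L[ℝ] ℝ}

theorem hasFDerivAt_of_subgradient {x : E} (hg : ContinuousAt g x)
    (hfg : ∀ y z, f y + g y (z - y) ≤ f z) : HasFDerivAt f (g x) x := by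
  rw [hasFDerivAt_iff_isLittleO, Asymptotics.isLittleO_iff]
  intro ε hε
  filter_upwards [Metric.continuousAt_iff'.1 hg ε hε] with y hy
  have h_lower : 0 ≤ f y - f x - g x (y - x) := by linarith [hfg x y]
  have h_upper : f y - f x - g x (y - x) ≤ (g y - g x) (y - x) := by
    have h_back := hfg y x
    rw [← neg_sub y x, map_neg] at h_back
    rw [sub_apply]
    linarith
  calc ‖f y - f x - g x (y - x)‖ = f y - f x - g x (y - x) := Real.norm_of_nonneg h_lower
    _ ≤ ‖(g y - g x) (y - x)‖ := h_upper.trans (Real.le_norm_self _)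
    _ ≤ ‖g y - g x‖ * ‖y - x‖ := (g y - g x).le_opNorm _
    _ ≤ ε * ‖y - x‖ := by
        gcongr
        exact (dist_eq_norm (g y) (g x) ▸ hy).le

end Subgradient

section FinThree

theorem fin_three_eq_or_eq_add (i j : Fin 3) : j = i ∨ j = i + 1 ∨ j = i + 2 := by
  decide +revert

@[to_additive]
theorem prod_fin_three_eq_rotate {M : Type*} [CommMonoid M] (f : Fin 3 → M) (i : Fin 3) :
    ∏ j, f j = f i * f (i + 1) * f (i + 2) := by
  rw [← Equiv.prod_comp (Equiv.addLeft i) f, Fin.prod_univ_three]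
  simp

end FinThree

section Cotangent

theorem cot_add_cot_eq_div {a b : ℝ} (ha : sin a ≠ 0) (hb : sin b ≠ 0) :
    cot a + cot b = sin (a + b) / (sin a * sin b) := by
  rw [cot_eq_cos_div_sin, cot_eq_cos_div_sin, sin_add]
  field_simp
  ring

theorem cot_mul_cot_add_cot_mul_cot_add_cot_mul_cot {a b c : ℝ} (ha : sin a ≠ 0) (hb : sin b ≠ 0)
    (hc : sin c ≠ 0) (h : a + b + c = π) :
    cot a * cot b + cot b * cot c + cot c * cot a = 1 := by
  obtain rfl : c = π - (a + b) := by linarith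
  rw [sin_pi_sub] at hc
  simp only [cot_eq_cos_div_sin, sin_pi_sub, cos_pi_sub]
  field_simp
  rw [sin_add, cos_add]
  ring

end Cotangent

section LogSin

/-- The primitive `∫₀ᵗ log (sin s) ds`. It is `-Λ(t) - t log 2` for the Lobachevsky function `Λ`;
the linear terms add up to the same constant for all triples of angles with sum `π` and are left
out. -/
def logSinIntegral (t : ℝ) : ℝ := ∫ s in (0 : ℝ)..t, log (sin s)

theorem continuous_logSinIntegral : Continuous logSinIntegral :=
  intervalIntegral.continuous_primitive (fun _ _ => intervalIntegrable_log_sin) 0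

theorem hasDerivAt_logSinIntegral {t : ℝ} (ht : sin t ≠ 0) :
    HasDerivAt logSinIntegral (log (sin t)) t :=
  intervalIntegral.integral_hasDerivAt_right intervalIntegrable_log_sin
    (measurable_log.comp measurable_sin).stronglyMeasurable.stronglyMeasurableAtFilter
    (continuous_sin.continuousAt.log ht)

theorem hasDerivAt_log_sin {t : ℝ} (ht : sin t ≠ 0) :
    HasDerivAt (fun s => log (sin s)) (cot t) t := by
  simpa only [cot_eq_cos_div_sin] using (hasDerivAt_sin t).log ht

variable {ι : Type*} [Fintype ι] {a d : ι → ℝ} {t : ℝ}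

theorem hasDerivAt_sum_logSinIntegral_line (h : ∀ i, sin (a i + t * d i) ≠ 0) :
    HasDerivAt (fun s => ∑ i, logSinIntegral (a i + s * d i))
      (∑ i, log (sin (a i + t * d i)) * d i) t := by
  refine .fun_sum fun i _ => ?_
  exact (hasDerivAt_logSinIntegral (h i)).comp t ((hasDerivAt_mul_const (d i)).const_add (a i))

theorem hasDerivAt_sum_log_sin_line (h : ∀ i, sin (a i + t * d i) ≠ 0) :
    HasDerivAt (fun s => ∑ i, log (sin (a i + s * d i)) * d i)
      (∑ i, cot (a i + t * d i) * d i ^ 2) t := by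
  refine .fun_sum fun i _ => ?_
  rw [pow_two, ← mul_assoc]
  exact ((hasDerivAt_log_sin (h i)).comp t
    ((hasDerivAt_mul_const (d i)).const_add (a i))).mul_const (d i)

end LogSin

section AngleSimplex

/-- The closed simplex of generalized triangle angles: nonnegative triples with sum `π`. -/
def angleSimplex : Set (Fin 3 → ℝ) := {a | (∀ i, 0 ≤ a i) ∧ ∑ i, a i = π}

variable {a b : Fin 3 → ℝ}

theorem sin_pos_of_sum_eq_pi (ha : ∀ i, 0 < a i) (hsum : ∑ i, a i = π) (i : Fin 3) :
    0 < sin (a i) := by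
  refine sin_pos_of_pos_of_lt_pi (ha i) ?_
  rw [sum_fin_three_eq_rotate a i] at hsum
  linarith [ha (i + 1), ha (i + 2)]

theorem sum_cot_mul_sq_nonneg {d : Fin 3 → ℝ} (ha : ∀ i, 0 < a i) (hsum : ∑ i, a i = π)
    (hd : ∑ i, d i = 0) : 0 ≤ ∑ i, cot (a i) * d i ^ 2 := by
  have h_sin := sin_pos_of_sum_eq_pi ha hsum
  rw [Fin.sum_univ_three] at hsum hd ⊢
  have h_cot := cot_mul_cot_add_cot_mul_cot_add_cot_mul_cot (h_sin 0).ne' (h_sin 1).ne'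
    (h_sin 2).ne' hsum
  have h_pos : 0 < cot (a 0) + cot (a 2) := by
    rw [cot_add_cot_eq_div (h_sin 0).ne' (h_sin 2).ne', ← sin_pi_sub,
      show π - (a 0 + a 2) = a 1 by linarith]
    exact div_pos (h_sin 1) (mul_pos (h_sin 0) (h_sin 2))
  have hd₂ : d 2 = -(d 0 + d 1) := by linarith
  -- After `d 2` is eliminated, the form in `d 0` and `d 1` has determinant `1` by `h_cot`.
  have h_square : cot (a 0) * d 0 ^ 2 + cot (a 1) * d 1 ^ 2 + cot (a 2) * d 2 ^ 2 =
      (((cot (a 0) + cot (a 2)) * d 0 + cot (a 2) * d 1) ^ 2 + d 1 ^ 2) /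
        (cot (a 0) + cot (a 2)) := by
    rw [hd₂, eq_div_iff h_pos.ne']
    linear_combination d 1 ^ 2 * h_cot
  rw [h_square]
  positivity

theorem convexOn_sum_logSinIntegral_line {d : Fin 3 → ℝ} (hsum : ∑ i, a i = π)
    (hd : ∑ i, d i = 0) (hpos : ∀ t ∈ Ioo (0 : ℝ) 1, ∀ i, 0 < a i + t * d i) :
    ConvexOn ℝ (Icc 0 1) fun t => ∑ i, logSinIntegral (a i + t * d i) := by
  have h_sum (t : ℝ) : ∑ i, (a i + t * d i) = π := by
    rw [Finset.sum_add_distrib, ← Finset.mul_sum, hd, hsum, mul_zero, add_zero]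
  have h_sin {t : ℝ} (ht : t ∈ Ioo (0 : ℝ) 1) (i : Fin 3) : sin (a i + t * d i) ≠ 0 :=
    (sin_pos_of_sum_eq_pi (hpos t ht) (h_sum t) i).ne'
  have h_cont := continuous_logSinIntegral
  refine convexOn_of_hasDerivWithinAt2_nonneg
    (f' := fun t => ∑ i, log (sin (a i + t * d i)) * d i)
    (f'' := fun t => ∑ i, cot (a i + t * d i) * d i ^ 2)
    (convex_Icc 0 1) (by fun_prop) ?_ ?_ ?_
  all_goals
    rw [interior_Icc]
    intro t ht
  · exact (hasDerivAt_sum_logSinIntegral_line (h_sin ht)).hasDerivWithinAt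
  · exact (hasDerivAt_sum_log_sin_line (h_sin ht)).hasDerivWithinAt
  · exact sum_cot_mul_sq_nonneg (hpos t ht) (h_sum t) hd

theorem sum_log_sin_mul_sub_le (ha : ∀ i, 0 < a i) (hsum : ∑ i, a i = π)
    (hb : b ∈ angleSimplex) :
    ∑ i, log (sin (a i)) * (b i - a i) ≤ ∑ i, logSinIntegral (b i) - ∑ i, logSinIntegral (a i) := by
  have h_sum_sub : ∑ i, (b i - a i) = 0 := by rw [Finset.sum_sub_distrib, hb.2, hsum, sub_self]
  have h_pos (t : ℝ) (ht : t ∈ Ioo (0 : ℝ) 1) (i : Fin 3) : 0 < a i + t * (b i - a i) := by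
    have h_convex : a i + t * (b i - a i) = (1 - t) * a i + t * b i := by ring
    rw [h_convex]
    exact add_pos_of_pos_of_nonneg (mul_pos (sub_pos.2 ht.2) (ha i)) (mul_nonneg ht.1.le (hb.1 i))
  have h_deriv := hasDerivAt_sum_logSinIntegral_line (a := a) (d := fun i => b i - a i) (t := 0)
    fun i => by simpa using (sin_pos_of_sum_eq_pi ha hsum i).ne'
  simpa [slope_def_field] using
    (convexOn_sum_logSinIntegral_line hsum h_sum_sub h_pos).le_slope_of_hasDerivAt
      (by simp) (by simp) one_pos h_deriv

end AngleSimplex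

section GeneralizedTriangle

variable {x : Fin 3 → ℝ} {i : Fin 3}

/-- The three side lengths satisfy the strict triangle inequalities: each side is shorter than
half the perimeter. -/
def IsStrictTriangle (x : Fin 3 → ℝ) : Prop := ∀ i, 2 * x i < ∑ j, x j

/-- The cosine of the angle opposite the side `x i` according to the law of cosines. -/
def cosineRatio (x : Fin 3 → ℝ) (i : Fin 3) : ℝ :=
  (x (i + 1) ^ 2 + x (i + 2) ^ 2 - x i ^ 2) / (2 * x (i + 1) * x (i + 2))

/-- Heron's expression for sixteen times the squared area of the triangle with side lengths `x`. -/
def heronProduct (x : Fin 3 → ℝ) : ℝ := (∑ j, x j) * ∏ j, (∑ k, x k - 2 * x j)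

/-- The common ratio of the sine of an angle to the length of the opposite side in the law of
sines, that is, the reciprocal of the circumdiameter. -/
def sineRatio (x : Fin 3 → ℝ) : ℝ := √(heronProduct x) / (2 * ∏ j, x j)

theorem cosineRatio_le_neg_one_iff (hx : ∀ j, 0 < x j) :
    cosineRatio x i ≤ -1 ↔ x (i + 1) + x (i + 2) ≤ x i := by
  have h₀ := hx i
  have h₁ := hx (i + 1)
  have h₂ := hx (i + 2)
  rw [cosineRatio, div_le_iff₀ (by positivity), ← sq_le_sq₀ (by positivity) h₀.le]
  constructor <;> intro h <;> linarith

theorem one_le_cosineRatio_iff (hx : ∀ j, 0 < x j) :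
    1 ≤ cosineRatio x i ↔ x i + x (i + 2) ≤ x (i + 1) ∨ x i + x (i + 1) ≤ x (i + 2) := by
  have h₀ := hx i
  have h₁ := hx (i + 1)
  have h₂ := hx (i + 2)
  have h_sq : 1 ≤ cosineRatio x i ↔ x i ^ 2 ≤ (x (i + 1) - x (i + 2)) ^ 2 := by
    rw [cosineRatio, le_div_iff₀ (by positivity)]
    constructor <;> intro h <;> linarith
  rw [h_sq, sq_le_sq, abs_of_pos h₀, le_abs, neg_sub, le_sub_iff_add_le, le_sub_iff_add_le]

theorem genAngle_eq_arccos (hx : ∀ j, 0 < x j) (i : Fin 3) :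
    genAngle x i = arccos (cosineRatio x i) := by
  unfold genAngle
  split_ifs with h_pi h_zero
  · exact (arccos_of_le_neg_one ((cosineRatio_le_neg_one_iff hx).2 h_pi)).symm
  · exact (arccos_of_one_le ((one_le_cosineRatio_iff hx).2 h_zero)).symm
  · rfl

theorem genAngle_eq_single (hx : ∀ j, 0 < x j) (hi : ∑ j, x j ≤ 2 * x i) :
    genAngle x = Pi.single i π := by
  funext j
  have h₀ := hx j
  have h₁ := hx (j + 1)
  have h₂ := hx (j + 2)
  rw [sum_fin_three_eq_rotate x j] at hi
  obtain rfl | rfl | rfl := fin_three_eq_or_eq_add j i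
  · rw [Pi.single_eq_same, genAngle, if_pos (by linarith)]
  · rw [Pi.single_eq_of_ne (by simp), genAngle, if_neg (by linarith),
      if_pos (.inl (by linarith))]
  · rw [Pi.single_eq_of_ne (by simp), genAngle, if_neg (by linarith),
      if_pos (.inr (by linarith))]

namespace IsStrictTriangle

theorem pos (h : IsStrictTriangle x) (i : Fin 3) : 0 < x i := by
  have h₁ := h (i + 1)
  have h₂ := h (i + 2)
  rw [sum_fin_three_eq_rotate x i] at h₁ h₂
  linarith

theorem heronProduct_pos (h : IsStrictTriangle x) : 0 < heronProduct x :=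
  mul_pos (Finset.sum_pos (fun j _ => h.pos j) Finset.univ_nonempty)
    (Finset.prod_pos fun j _ => sub_pos.2 (h j))

theorem cosineRatio_mem_Ioo (h : IsStrictTriangle x) (i : Fin 3) :
    cosineRatio x i ∈ Ioo (-1) 1 := by
  have h₀ := h i
  have h₁ := h (i + 1)
  have h₂ := h (i + 2)
  rw [sum_fin_three_eq_rotate x i] at h₀ h₁ h₂
  rw [mem_Ioo, ← not_le, ← not_le, cosineRatio_le_neg_one_iff h.pos, one_le_cosineRatio_iff h.pos]
  exact ⟨by linarith, by rintro (h | h) <;> linarith⟩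

theorem genAngle_pos (h : IsStrictTriangle x) (i : Fin 3) : 0 < genAngle x i := by
  rw [genAngle_eq_arccos h.pos, arccos_pos]
  exact (h.cosineRatio_mem_Ioo i).2

theorem genAngle_lt_pi (h : IsStrictTriangle x) (i : Fin 3) : genAngle x i < π := by
  rw [genAngle_eq_arccos h.pos, arccos_lt_pi]
  exact (h.cosineRatio_mem_Ioo i).1

theorem cos_genAngle (h : IsStrictTriangle x) (i : Fin 3) :
    cos (genAngle x i) = cosineRatio x i := by
  rw [genAngle_eq_arccos h.pos]
  exact cos_arccos (h.cosineRatio_mem_Ioo i).1.le (h.cosineRatio_mem_Ioo i).2.le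

theorem sineRatio_pos (h : IsStrictTriangle x) : 0 < sineRatio x :=
  div_pos (sqrt_pos.2 h.heronProduct_pos)
    (mul_pos two_pos (Finset.prod_pos fun j _ => h.pos j))

theorem sineRatio_sq (h : IsStrictTriangle x) :
    sineRatio x ^ 2 = heronProduct x / (2 * ∏ j, x j) ^ 2 := by
  rw [sineRatio, div_pow, sq_sqrt h.heronProduct_pos.le]

theorem sin_genAngle (h : IsStrictTriangle x) (i : Fin 3) :
    sin (genAngle x i) = sineRatio x * x i := by
  have h₀ := h.pos i
  have h₁ := h.pos (i + 1)
  have h₂ := h.pos (i + 2)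
  have h_sq : 1 - cosineRatio x i ^ 2 = (sineRatio x * x i) ^ 2 := by
    rw [mul_pow, h.sineRatio_sq, cosineRatio, heronProduct, prod_fin_three_eq_rotate x i,
      prod_fin_three_eq_rotate _ i, sum_fin_three_eq_rotate x i]
    field_simp
    ring
  rw [genAngle_eq_arccos h.pos, sin_arccos, h_sq, sqrt_sq (mul_pos h.sineRatio_pos h₀).le]

theorem cos_sum_genAngle (h : IsStrictTriangle x) : cos (∑ i, genAngle x i) = -1 := by
  have h₀ := h.pos 0
  have h₁ := h.pos 1
  have h₂ := h.pos 2
  have h_expand : cos (∑ i, genAngle x i) =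
      ∏ i, cosineRatio x i - sineRatio x ^ 2 * (cosineRatio x 0 * (x 1 * x 2) +
        cosineRatio x 1 * (x 2 * x 0) + cosineRatio x 2 * (x 0 * x 1)) := by
    simp only [Fin.sum_univ_three, Fin.prod_univ_three, cos_add, sin_add, h.cos_genAngle,
      h.sin_genAngle]
    ring
  rw [h_expand, h.sineRatio_sq]
  simp only [cosineRatio, heronProduct, Fin.prod_univ_three, Fin.sum_univ_three, Fin.isValue,
    Fin.reduceAdd, zero_add]
  field_simp
  ring

theorem sum_genAngle (h : IsStrictTriangle x) : ∑ i, genAngle x i = π := by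
  have h_cos : cos (∑ i, genAngle x i - π) = 1 := by
    rw [cos_sub_pi, h.cos_sum_genAngle, neg_neg]
  rw [cos_eq_one_iff_of_lt_of_lt] at h_cos
  · linarith
  all_goals
    rw [Fin.sum_univ_three]
    linarith [h.genAngle_pos 0, h.genAngle_pos 1, h.genAngle_pos 2, h.genAngle_lt_pi 0,
      h.genAngle_lt_pi 1, h.genAngle_lt_pi 2]

end IsStrictTriangle

theorem genAngle_mem_angleSimplex (hx : ∀ i, 0 < x i) : genAngle x ∈ angleSimplex := by
  refine ⟨fun i => genAngle_eq_arccos hx i ▸ arccos_nonneg _, ?_⟩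
  by_cases h : IsStrictTriangle x
  · exact h.sum_genAngle
  · obtain ⟨i, hi⟩ : ∃ i, ∑ j, x j ≤ 2 * x i := by simpa [IsStrictTriangle] using h
    rw [genAngle_eq_single hx hi, Finset.sum_pi_single']
    simp

end GeneralizedTriangle

section Potential

/-- The angles of a generalized triangle as functions of the logarithms of its side lengths. -/
def logAngle (u : Fin 3 → ℝ) : Fin 3 → ℝ := genAngle fun i => exp (u i)

/-- The functional that the angles of the generalized triangle with side lengths `exp (u i)`
maximize on `angleSimplex`. -/
def angleFunctional (u a : Fin 3 → ℝ) : ℝ := ∑ i, (a i * u i - logSinIntegral (a i))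

/-- The potential of the angles: the maximum of `angleFunctional u` on `angleSimplex`. -/
def anglePotential (u : Fin 3 → ℝ) : ℝ := angleFunctional u (logAngle u)

variable {u a : Fin 3 → ℝ} {i : Fin 3}

theorem logAngle_mem_angleSimplex (u : Fin 3 → ℝ) : logAngle u ∈ angleSimplex :=
  genAngle_mem_angleSimplex fun _ => exp_pos _

theorem continuous_logAngle : Continuous logAngle := by
  have h_arccos : logAngle = fun u i => arccos (cosineRatio (fun j => exp (u j)) i) :=
    funext₂ fun u i => genAngle_eq_arccos (fun _ => exp_pos _) i
  rw [h_arccos]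
  refine continuous_pi fun i => continuous_arccos.comp ?_
  unfold cosineRatio
  exact .div (by fun_prop) (by fun_prop) fun u => by positivity

theorem continuous_anglePotential : Continuous anglePotential := by
  have h_angle := continuous_logAngle
  have h_integral := continuous_logSinIntegral
  unfold anglePotential angleFunctional
  fun_prop

theorem angleFunctional_add (u v a : Fin 3 → ℝ) :
    angleFunctional (u + v) a = angleFunctional u a + ∑ i, a i * v i := by
  rw [angleFunctional, angleFunctional, ← Finset.sum_add_distrib]
  exact Finset.sum_congr rfl fun i _ => by rw [Pi.add_apply]; ring

theorem angleFunctional_add_single (u a : Fin 3 → ℝ) (i : Fin 3) (s : ℝ) :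
    angleFunctional (u + Pi.single i s) a = angleFunctional u a + a i * s := by
  rw [angleFunctional_add]
  simp [Pi.single_apply]

theorem log_sin_logAngle (h : IsStrictTriangle fun i => exp (u i)) (i : Fin 3) :
    log (sin (logAngle u i)) = u i + log (sineRatio fun i => exp (u i)) := by
  rw [logAngle, h.sin_genAngle, log_mul h.sineRatio_pos.ne' (exp_ne_zero _), log_exp, add_comm]

theorem angleFunctional_le_of_isStrictTriangle (h : IsStrictTriangle fun i => exp (u i))
    (ha : a ∈ angleSimplex) : angleFunctional u a ≤ anglePotential u := by
  have h_tangent : ∑ i, log (sin (logAngle u i)) * (a i - logAngle u i) ≤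
      ∑ i, logSinIntegral (a i) - ∑ i, logSinIntegral (logAngle u i) :=
    sum_log_sin_mul_sub_le h.genAngle_pos h.sum_genAngle ha
  -- The law of sines makes `u` the gradient at `logAngle u`, up to a constant vector, and constant
  -- vectors are normal to the simplex.
  have h_gradient : ∑ i, log (sin (logAngle u i)) * (a i - logAngle u i) =
      ∑ i, a i * u i - ∑ i, logAngle u i * u i := by
    simp only [log_sin_logAngle h, add_mul, Finset.sum_add_distrib, ← Finset.mul_sum]
    rw [Finset.sum_sub_distrib, ha.2, (logAngle_mem_angleSimplex u).2, sub_self, mul_zero,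
      add_zero, ← Finset.sum_sub_distrib]
    exact Finset.sum_congr rfl fun i _ => by ring
  simp only [anglePotential, angleFunctional, Finset.sum_sub_distrib]
  linarith

theorem sum_exp_update (u : Fin 3 → ℝ) (i : Fin 3) (t : ℝ) :
    ∑ j, exp (Function.update u i t j) = exp t + exp (u (i + 1)) + exp (u (i + 2)) := by
  rw [sum_fin_three_eq_rotate _ i]
  simp

theorem mem_closure_isStrictTriangle (h : ∑ j, exp (u j) = 2 * exp (u i)) :
    u ∈ closure {v | IsStrictTriangle fun j => exp (v j)} := by
  have h_tendsto : Tendsto (Function.update u i) (nhdsWithin (u i) (Iio (u i))) (nhds u) := by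
    have h_cont : Continuous (Function.update u i) := continuous_const.update i continuous_id
    simpa using (h_cont.tendsto (u i)).mono_left nhdsWithin_le_nhds
  rw [sum_fin_three_eq_rotate _ i] at h
  have h_abs : |exp (u (i + 1)) - exp (u (i + 2))| < exp (u i) := by
    rw [abs_lt]
    constructor <;> linarith [exp_pos (u (i + 1)), exp_pos (u (i + 2))]
  refine mem_closure_of_tendsto h_tendsto ?_
  filter_upwards [self_mem_nhdsWithin, nhdsWithin_le_nhds
    (continuous_exp.continuousAt.eventually_const_lt h_abs)] with t ht h_abs_t j
  have ht_exp : exp t < exp (u i) := exp_lt_exp.2 ht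
  have h_abs_t := abs_lt.1 h_abs_t
  change 2 * exp (Function.update u i t j) < ∑ k, exp (Function.update u i t k)
  rw [sum_exp_update]
  obtain rfl | rfl | rfl := fin_three_eq_or_eq_add i j
  · rw [Function.update_self]
    linarith
  · rw [Function.update_of_ne (by simp)]
    linarith
  · rw [Function.update_of_ne (by simp)]
    linarith

theorem angleFunctional_le_of_mem_closure
    (hu : u ∈ closure {v | IsStrictTriangle fun j => exp (v j)}) (ha : a ∈ angleSimplex) :
    angleFunctional u a ≤ anglePotential u := by
  have h_cont : Continuous fun v => angleFunctional v a := by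
    unfold angleFunctional
    fun_prop
  exact closure_minimal (fun v hv => angleFunctional_le_of_isStrictTriangle hv ha)
    (isClosed_le h_cont continuous_anglePotential) hu

theorem anglePotential_eq_of_degenerate (h : ∑ j, exp (u j) ≤ 2 * exp (u i)) :
    anglePotential u = angleFunctional u (Pi.single i π) := by
  rw [anglePotential, logAngle, genAngle_eq_single (fun _ => exp_pos _) h]

theorem angleFunctional_le_of_degenerate (h : ∑ j, exp (u j) ≤ 2 * exp (u i))
    (ha : a ∈ angleSimplex) : angleFunctional u a ≤ anglePotential u := by
  let others := exp (u (i + 1)) + exp (u (i + 2))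
  have h_others : 0 < others := add_pos (exp_pos _) (exp_pos _)
  let v := Function.update u i (log others)
  have hv : v i = log others := Function.update_self ..
  have h_boundary : ∑ j, exp (v j) = 2 * exp (v i) := by
    rw [sum_exp_update, hv, exp_log h_others, add_assoc, ← two_mul]
  have hs : 0 ≤ u i - log others := by
    rw [sub_nonneg, log_le_iff_le_exp h_others]
    rw [sum_fin_three_eq_rotate _ i] at h
    linarith
  have hu : v + Pi.single i (u i - log others) = u := by
    funext j
    obtain rfl | hj := eq_or_ne j i <;> simp [v, *]
  have ha_le : a i ≤ π := ha.2 ▸ Finset.single_le_sum (fun j _ => ha.1 j) (Finset.mem_univ i)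
  calc angleFunctional u a
      = angleFunctional v a + a i * (u i - log others) := by
        rw [← angleFunctional_add_single, hu]
    _ ≤ anglePotential v + π * (u i - log others) := by
        gcongr
        exact angleFunctional_le_of_mem_closure (mem_closure_isStrictTriangle h_boundary) ha
    _ = anglePotential u := by
        rw [anglePotential_eq_of_degenerate h, anglePotential_eq_of_degenerate h_boundary.le]
        conv_rhs => rw [← hu, angleFunctional_add_single, Pi.single_eq_same]

theorem angleFunctional_le_anglePotential (u : Fin 3 → ℝ) (ha : a ∈ angleSimplex) :
    angleFunctional u a ≤ anglePotential u := by
  by_cases h : IsStrictTriangle fun i => exp (u i)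
  · exact angleFunctional_le_of_isStrictTriangle h ha
  · obtain ⟨i, hi⟩ : ∃ i, ∑ j, exp (u j) ≤ 2 * exp (u i) := by simpa [IsStrictTriangle] using h
    exact angleFunctional_le_of_degenerate hi ha

/-- The differential form `∑ i, aᵢ duᵢ` in the logarithmic lengths `u`. -/
def angleForm (u : Fin 3 → ℝ) : (Fin 3 → ℝ) →L[ℝ] ℝ := ∑ i, logAngle u i • .proj i

theorem angleForm_apply (u v : Fin 3 → ℝ) : angleForm u v = ∑ i, logAngle u i * v i := by
  simp [angleForm]

theorem angleForm_single (u : Fin 3 → ℝ) (i : Fin 3) :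
    angleForm u (Pi.single i 1) = logAngle u i := by
  simp [angleForm_apply, Pi.single_apply]

theorem continuous_angleForm : Continuous angleForm := by
  have h_angle := continuous_logAngle
  unfold angleForm
  fun_prop

theorem anglePotential_add_angleForm_le (u v : Fin 3 → ℝ) :
    anglePotential u + angleForm u (v - u) ≤ anglePotential v := by
  rw [anglePotential, angleForm_apply, ← angleFunctional_add, add_sub_cancel]
  exact angleFunctional_le_anglePotential v (logAngle_mem_angleSimplex u)

theorem hasFDerivAt_anglePotential (u : Fin 3 → ℝ) :
    HasFDerivAt anglePotential (angleForm u) u :=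
  hasFDerivAt_of_subgradient continuous_angleForm.continuousAt anglePotential_add_angleForm_le

theorem convexOn_anglePotential : ConvexOn ℝ univ anglePotential :=
  convexOn_of_subgradient (g := fun u => (angleForm u).toLinearMap) convex_univ
    fun u _ v _ => anglePotential_add_angleForm_le u v

end Potential

/-- there is a `C¹` convex potential `F : ℝ³ → ℝ` with
`∂F/∂uᵢ(u) = aᵢ(e^{u₁}, e^{u₂}, e^{u₃})`. -/
theorem exists_C1_convex_potential_of_angles :
    ∃ F : (Fin 3 → ℝ) → ℝ, ContDiff ℝ 1 F ∧ ConvexOn ℝ Set.univ F ∧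
      ∀ (u : Fin 3 → ℝ) (i : Fin 3),
        fderiv ℝ F u (Pi.single i 1) = genAngle (fun j => Real.exp (u j)) i := by
  refine ⟨anglePotential, contDiff_one_iff_hasFDerivAt.2
    ⟨angleForm, continuous_angleForm, hasFDerivAt_anglePotential⟩, convexOn_anglePotential,
    fun u i => ?_⟩
  rw [(hasFDerivAt_anglePotential u).fderiv, angleForm_single, logAngle]
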